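/- arXiv:2101.06758 — 6 statements merged into one kernel-verified Lean document; each statement's English description precedes it below -/
import Mathlib

section
/- Let γ be a real number with γ > 1 and set α = (γ − 1)/(γ + 1). For every integer i and every positive real x with γ^(i−1) < x ≤ γ^i, the representative value x̃ = 2γ^i/(γ + 1) satisfies |x̃ − x| ≤ α·x. Hence answering a query for an item lying in bucket i with the value 2γ^i/(γ+1) is α-accurate in relative error. -/
/-!
The representative `2 * γ ^ i / (γ + 1)` is the harmonic mean of the endpoints `γ ^ (i - 1)` and
`γ ^ i` of bucket `i`. As an estimate of a point of `[a, b]`, the harmonic mean has its largest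
relative error at the endpoints, and it is the value for which the two errors agree: it equals
`(1 + α) * a` and `(1 - α) * b` for `α = (b - a) / (b + a)`, which is `(γ - 1) / (γ + 1)` when
`b = γ * a`.
-/

section LinearOrderedField

variable {K : Type*} [Field K] [LinearOrder K] [IsStrictOrderedRing K]

theorem abs_harmonic_mean_sub_le {a b x : K} (ha : 0 < a) (hax : a ≤ x) (hxb : x ≤ b) :
    |2 * a * b / (a + b) - x| ≤ (b - a) / (b + a) * x := by
  have hb : 0 < b := ha.trans_le (hax.trans hxb)
  have one_add_error : 1 + (b - a) / (b + a) = 2 * b / (a + b) := by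
    field_simp
    ring
  have one_sub_error : 1 - (b - a) / (b + a) = 2 * a / (a + b) := by
    field_simp
    ring
  have upper : 2 * a * b / (a + b) ≤ (1 + (b - a) / (b + a)) * x :=
    calc 2 * a * b / (a + b) = 2 * b / (a + b) * a := by ring
      _ ≤ 2 * b / (a + b) * x := by gcongr
      _ = (1 + (b - a) / (b + a)) * x := by rw [one_add_error]
  have lower : (1 - (b - a) / (b + a)) * x ≤ 2 * a * b / (a + b) :=
    calc (1 - (b - a) / (b + a)) * x = 2 * a / (a + b) * x := by rw [one_sub_error]
      _ ≤ 2 * a / (a + b) * b := by gcongr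
      _ = 2 * a * b / (a + b) := by ring
  rw [abs_sub_le_iff]
  constructor <;> linarith

theorem ddsketch_bucket_representative_accuracy_general {γ : K} (hγ : 0 < γ) {i : ℤ} {x : K}
    (hlo : γ ^ (i - 1) ≤ x) (hhi : x ≤ γ ^ i) :
    |2 * γ ^ i / (γ + 1) - x| ≤ (γ - 1) / (γ + 1) * x := by
  have hpos : 0 < γ ^ (i - 1) := zpow_pos hγ _
  have hstep : γ ^ i = γ ^ (i - 1) * γ := by rw [← zpow_add_one₀ hγ.ne', sub_add_cancel]
  have hmean : 2 * γ ^ (i - 1) * γ ^ i / (γ ^ (i - 1) + γ ^ i) = 2 * γ ^ i / (γ + 1) := by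
    rw [hstep]
    field_simp
    ring
  have herror : (γ ^ i - γ ^ (i - 1)) / (γ ^ i + γ ^ (i - 1)) = (γ - 1) / (γ + 1) := by
    rw [hstep]
    field_simp
  simpa only [hmean, herror] using abs_harmonic_mean_sub_le hpos hlo hhi

end LinearOrderedField

/-- With α = (γ−1)/(γ+1), the representative 2γ^i/(γ+1) of bucket i
is an α-accurate estimate of any x with γ^(i−1) < x ≤ γ^i. -/
theorem ddsketch_bucket_representative_accuracy (γ : ℝ) (hγ : 1 < γ) (i : ℤ) (x : ℝ)
    (hx : 0 < x) (hlo : γ ^ (i - 1) < x) (hhi : x ≤ γ ^ i) :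
    |2 * γ ^ i / (γ + 1) - x| ≤ (γ - 1) / (γ + 1) * x :=
  ddsketch_bucket_representative_accuracy_general (zero_lt_one.trans hγ) hlo.le hhi
end

section
/- Let γ be a real number with γ > 1 and let x be a positive real. Then ⌈log_{γ²} x⌉ = ⌈⌈log_γ x⌉ / 2⌉, where the inner ceiling is the integer ceiling of a real and the outer one is the ceiling of the integer division by 2. In other words, the uniform-collapse reindexing i ↦ ⌈i/2⌉ applied to the bucket index with base γ yields exactly the bucket index with base γ². -/
/-!
An integer `m` bounds `a / n` from above iff `m * n` bounds `a`, and since `m * n` is an integer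
it bounds `a` iff it bounds `⌈a⌉`. Rounding `a = log_γ x` up before dividing by `n` is therefore
harmless.
-/

theorem ceil_intCast_ceil_div_natCast {K L : Type*}
    [Field K] [LinearOrder K] [IsStrictOrderedRing K] [FloorRing K]
    [Field L] [LinearOrder L] [IsStrictOrderedRing L] [FloorRing L]
    (a : K) {n : ℕ} (hn : 0 < n) : ⌈(⌈a⌉ : L) / n⌉ = ⌈a / n⌉ := by
  refine eq_of_forall_ge_iff fun m => ?_
  calc
    ⌈(⌈a⌉ : L) / n⌉ ≤ m ↔ (⌈a⌉ : L) ≤ m * n := by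
      rw [Int.ceil_le, div_le_iff₀ (Nat.cast_pos.2 hn)]
    _ ↔ ⌈a⌉ ≤ m * n := by norm_cast
    _ ↔ a ≤ m * n := by rw [Int.ceil_le, Int.cast_mul, Int.cast_natCast]
    _ ↔ ⌈a / n⌉ ≤ m := by rw [Int.ceil_le, div_le_iff₀ (Nat.cast_pos.2 hn)]

theorem logb_pow_base (b x : ℝ) (n : ℕ) : Real.logb (b ^ n) x = Real.logb b x / n := by
  rw [Real.logb, Real.logb, Real.log_pow, div_mul_eq_div_div_swap]

theorem collapse_reindexing_general {γ x : ℝ} (hγ₀ : 0 < γ) (hγ₁ : γ ≠ 1) (hx : 0 < x)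
    {n : ℕ} (hn : 0 < n) :
    ⌈Real.logb (γ ^ n) x⌉ = ⌈(⌈Real.logb γ x⌉ : ℚ) / n⌉ := by
  rw [logb_pow_base, ceil_intCast_ceil_div_natCast _ hn]

/-- The uniform-collapse reindexing i ↦ ⌈i/2⌉ applied to the
bucket index with base γ yields the bucket index with base γ². -/
theorem collapse_reindexing (γ : ℝ) (hγ : 1 < γ) (x : ℝ) (hx : 0 < x) :
    ⌈Real.logb (γ ^ 2) x⌉ = ⌈((⌈Real.logb γ x⌉ : ℚ) / 2)⌉ :=
  collapse_reindexing_general (zero_lt_one.trans hγ) hγ.ne' hx two_pos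
end

section
/- Let γ > 1 be a real number, let D be a multiset of positive reals, and let t be a natural number. Then the t-fold iterate of the uniform collapse operator applied to the γ-sketch of D equals the sketch of D with base γ^(2^t): UC^[t](sk_γ(D)) = sk_{γ^(2^t)}(D). -/
/-!
Squaring the base halves the logarithm, and `⌈y / 2⌉ = j` holds exactly when `⌈y⌉` is `2 * j - 1`
or `2 * j`. So bucket `j` for base `γ ^ 2` is the disjoint union of the two buckets for base `γ`
that the collapse merges into position `j`, and each collapse squares the base.
-/

/-- The γ-sketch of a multiset D of positive reals. -/
noncomputable def sk (γ : ℝ) (D : Multiset ℝ) : ℤ → ℕ :=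
  fun k => (D.filter (fun x => ⌈Real.logb γ x⌉ = k)).card

/-- The uniform collapse operator. -/
def UC (f : ℤ → ℕ) : ℤ → ℕ := fun j => f (2 * j - 1) + f (2 * j)

theorem ceil_div_natCast_eq_iff {k : Type*} [Field k] [LinearOrder k] [IsStrictOrderedRing k]
    [FloorRing k] {n : ℕ} (hn : 0 < n) (a : k) (j : ℤ) :
    ⌈a / n⌉ = j ↔ n * (j - 1) < ⌈a⌉ ∧ ⌈a⌉ ≤ n * j := by
  have hn' : (0 : k) < n := Nat.cast_pos.2 hn
  rw [Int.ceil_eq_iff, lt_div_iff₀' hn', div_le_iff₀' hn', Int.lt_ceil, Int.ceil_le]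
  push_cast
  rfl

theorem ceil_div_two_eq_iff {k : Type*} [Field k] [LinearOrder k] [IsStrictOrderedRing k]
    [FloorRing k] (a : k) (j : ℤ) :
    ⌈a / 2⌉ = j ↔ ⌈a⌉ = 2 * j - 1 ∨ ⌈a⌉ = 2 * j := by
  have h := ceil_div_natCast_eq_iff two_pos a j
  push_cast at h
  rw [h]
  omega

theorem card_filter_or_of_disjoint {α : Type*} {p q : α → Prop} [DecidablePred p]
    [DecidablePred q] {s : Multiset α} (h : ∀ x ∈ s, ¬(p x ∧ q x)) :
    (s.filter fun x => p x ∨ q x).card = (s.filter p).card + (s.filter q).card := by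
  rw [← Multiset.card_add, Multiset.filter_add_filter, Multiset.filter_eq_nil.2 h, add_zero]

theorem UC_sk (γ : ℝ) (D : Multiset ℝ) : UC (sk γ D) = sk (γ ^ 2) D := by
  funext j
  simp only [UC, sk, logb_pow_base, Nat.cast_ofNat, ceil_div_two_eq_iff]
  exact (card_filter_or_of_disjoint fun x _ _ => by omega).symm

/-- The t-fold iterate of the uniform collapse applied to a γ-sketch
equals the sketch of the same data with base γ^(2^t). -/
theorem iterated_collapse (γ : ℝ) (hγ : 1 < γ) (D : Multiset ℝ)
    (hpos : ∀ x ∈ D, 0 < x) (t : ℕ) :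
    UC^[t] (sk γ D) = sk (γ ^ 2 ^ t) D := by
  induction t with
  | zero => rw [Function.iterate_zero_apply, pow_zero, pow_one]
  | succ t ih => rw [Function.iterate_succ_apply', ih, UC_sk, ← pow_mul, ← pow_succ]
end

section
/- (Size guarantee.) Let γ > 1 be a real, let m ≥ 1 be a natural number, and let x_min, x_max be reals with 0 < x_min ≤ x_max. If γ^(m−1) ≥ x_max/x_min, then the set of bucket indices { ⌈log_γ x⌉ : x_min ≤ x ≤ x_max } has cardinality at most m. Hence a sketch with base γ over data drawn from [x_min, x_max] has at most m nonempty buckets. -/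
open Set

/-- The index `i_γ(x)` of the bucket receiving `x` in a sketch with base `γ`, meaningful for `1 < γ`
and `0 < x`: bucket `i` is then the interval `(γ ^ (i - 1), γ ^ i]`. -/
noncomputable def bucketIndex (γ x : ℝ) : ℤ :=
  ⌈Real.logb γ x⌉

section BucketIndex

variable {γ : ℝ}

theorem monotoneOn_bucketIndex (hγ : 1 < γ) : MonotoneOn (bucketIndex γ) (Ioi 0) :=
  fun _ hx _ _ hxy => Int.ceil_mono (Real.logb_le_logb_of_le hγ hx hxy)

theorem bucketIndex_mul_zpow {x : ℝ} (hγ₀ : 0 < γ) (hγ₁ : γ ≠ 1) (hx : x ≠ 0) (n : ℤ) :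
    bucketIndex γ (x * γ ^ n) = bucketIndex γ x + n := by
  have hlog : Real.logb γ (x * γ ^ n) = Real.logb γ x + n := by
    rw [Real.logb_mul hx (zpow_ne_zero n hγ₀.ne'), ← Real.rpow_intCast, Real.logb_rpow hγ₀ hγ₁]
  rw [bucketIndex, hlog, Int.ceil_add_intCast, bucketIndex]

theorem mapsTo_bucketIndex_Icc {a : ℝ} (hγ : 1 < γ) (ha : 0 < a) (n : ℤ) :
    MapsTo (bucketIndex γ) (Icc a (a * γ ^ n))
      (Icc (bucketIndex γ a) (bucketIndex γ a + n)) := by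
  have hγ₀ : 0 < γ := one_pos.trans hγ
  rw [← bucketIndex_mul_zpow hγ₀ hγ.ne' ha.ne' n]
  exact ((monotoneOn_bucketIndex hγ).mono fun _ hx => ha.trans_le hx.1).mapsTo_Icc

theorem finite_bucketIndex_image_Icc {a : ℝ} (hγ : 1 < γ) (ha : 0 < a) (n : ℤ) :
    (bucketIndex γ '' Icc a (a * γ ^ n)).Finite :=
  (finite_Icc _ _).subset (mapsTo_bucketIndex_Icc hγ ha n).image_subset

theorem ncard_bucketIndex_image_Icc_le {a : ℝ} (hγ : 1 < γ) (ha : 0 < a) (n : ℤ) :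
    (bucketIndex γ '' Icc a (a * γ ^ n)).ncard ≤ (n + 1).toNat :=
  calc (bucketIndex γ '' Icc a (a * γ ^ n)).ncard
      ≤ (Icc (bucketIndex γ a) (bucketIndex γ a + n)).ncard :=
        ncard_le_ncard (mapsTo_bucketIndex_Icc hγ ha n).image_subset (finite_Icc _ _)
    _ = (n + 1).toNat := by
        rw [← Finset.coe_Icc, ncard_coe_finset, Int.card_Icc]
        congr 1
        ring

end BucketIndex

/-- Size guarantee: if γ^(m−1) ≥ x_max/x_min then the set of
bucket indices ⌈log_γ x⌉ attained on [x_min, x_max] has cardinality at most m. -/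
theorem size_guarantee (γ : ℝ) (hγ : 1 < γ) (m : ℕ) (hm : 1 ≤ m)
    (xmin xmax : ℝ) (hmin : 0 < xmin) (hle : xmin ≤ xmax)
    (hbase : xmax / xmin ≤ γ ^ (m - 1)) :
    {i : ℤ | ∃ x : ℝ, xmin ≤ x ∧ x ≤ xmax ∧ i = ⌈Real.logb γ x⌉}.Finite ∧
    {i : ℤ | ∃ x : ℝ, xmin ≤ x ∧ x ≤ xmax ∧ i = ⌈Real.logb γ x⌉}.ncard ≤ m := by
  have hmax : xmax ≤ xmin * γ ^ ((m : ℤ) - 1) := by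
    rw [← Nat.cast_pred hm, zpow_natCast]
    exact (div_le_iff₀' hmin).mp hbase
  have hsub : {i : ℤ | ∃ x : ℝ, xmin ≤ x ∧ x ≤ xmax ∧ i = ⌈Real.logb γ x⌉} ⊆
      bucketIndex γ '' Icc xmin (xmin * γ ^ ((m : ℤ) - 1)) := by
    rintro _ ⟨x, hminx, hxmax, rfl⟩
    exact ⟨x, ⟨hminx, hxmax.trans hmax⟩, rfl⟩
  have hfin := finite_bucketIndex_image_Icc hγ hmin ((m : ℤ) - 1)
  have hcard := ncard_bucketIndex_image_Icc_le hγ hmin ((m : ℤ) - 1)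
  rw [sub_add_cancel, Int.toNat_natCast] at hcard
  exact ⟨hfin.subset hsub, (ncard_le_ncard hsub hfin).trans hcard⟩
end

section
/- If γ > 1 is a real, m ≥ 1 is a natural number, x_min and x_max are reals with 0 < x_min ≤ x_max, and D is a nonempty multiset of reals all lying in [x_min, x_max] such that the set of bucket indices { ⌈log_γ x⌉ : x ∈ D } has cardinality strictly greater than m, then γ^(m−1) ≤ x_max/x_min. Equivalently, if the base γ is too large relative to the data range, the sketch cannot exceed m buckets. -/
/-!
The map `x ↦ log_γ x` sends `[xmin, xmax]` into an interval of length `log_γ (xmax / xmin)`, and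
rounding up an interval of length `ℓ` produces fewer than `ℓ + 2` integers. Hence `n + 2` distinct
bucket indices force `n < log_γ (xmax / xmin)`, and exponentiating to base `γ` gives the bound.
-/

open Set

theorem image_ceil_subset_Icc {K : Type*} [Ring K] [LinearOrder K] [FloorRing K]
    {a b : K} {S : Set K} (hS : S ⊆ Icc a b) : Int.ceil '' S ⊆ Icc ⌈a⌉ ⌈b⌉ :=
  (Int.ceil_mono.mapsTo_Icc.mono_left hS).image_subset

theorem ncard_image_ceil_lt {K : Type*} [CommRing K] [LinearOrder K] [IsStrictOrderedRing K]
    [FloorRing K] {a b : K} (hab : a ≤ b) {S : Set K} (hS : S ⊆ Icc a b) :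
    ((Int.ceil '' S).ncard : K) < b - a + 2 := by
  have hceil : ⌈a⌉ ≤ ⌈b⌉ := Int.ceil_mono hab
  have hcard : ((Int.ceil '' S).ncard : ℤ) ≤ ⌈b⌉ + 1 - ⌈a⌉ := by
    have h := ncard_le_ncard (image_ceil_subset_Icc hS) (finite_Icc _ _)
    rw [← Finset.coe_Icc, ncard_coe_finset, Int.card_Icc] at h
    omega
  calc ((Int.ceil '' S).ncard : K) ≤ ⌈b⌉ + 1 - ⌈a⌉ := mod_cast hcard
    _ < (b + 1) + 1 - a := by linarith [Int.ceil_lt_add_one b, Int.le_ceil a]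
    _ = b - a + 2 := by ring

theorem ncard_image_bucketIndex_lt {γ xmin xmax : ℝ} (hγ : 1 < γ) (hmin : 0 < xmin)
    (hle : xmin ≤ xmax) {S : Set ℝ} (hS : S ⊆ Icc xmin xmax) :
    ((bucketIndex γ '' S).ncard : ℝ) < Real.logb γ (xmax / xmin) + 2 := by
  have hmono : MonotoneOn (Real.logb γ) (Icc xmin xmax) := fun _ hx _ _ hxy ↦
    Real.logb_le_logb_of_le hγ (hmin.trans_le hx.1) hxy
  have hlog : Real.logb γ '' S ⊆ Icc (Real.logb γ xmin) (Real.logb γ xmax) :=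
    (hmono.mapsTo_Icc.mono_left hS).image_subset
  have hcard := ncard_image_ceil_lt (Real.logb_le_logb_of_le hγ hmin hle) hlog
  rwa [image_image, ← Real.logb_div (hmin.trans_le hle).ne' hmin.ne'] at hcard

theorem too_many_buckets_bounds_base_general {γ xmin xmax : ℝ} (hγ : 1 < γ) (hmin : 0 < xmin)
    {S : Set ℝ} (hS : S ⊆ Icc xmin xmax) {n : ℕ} (hcard : n + 1 < (bucketIndex γ '' S).ncard) :
    γ ^ n < xmax / xmin := by
  obtain ⟨x, hx⟩ : S.Nonempty :=
    (nonempty_of_ncard_ne_zero (Nat.ne_zero_of_lt hcard)).of_image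
  have hle : xmin ≤ xmax := (hS hx).1.trans (hS hx).2
  have hcard' : (n : ℝ) + 2 ≤ (bucketIndex γ '' S).ncard := mod_cast hcard
  have hlog : (n : ℝ) < Real.logb γ (xmax / xmin) := by
    linarith [ncard_image_bucketIndex_lt hγ hmin hle hS]
  rwa [Real.lt_logb_iff_rpow_lt hγ (div_pos (hmin.trans_le hle) hmin), Real.rpow_natCast] at hlog

/-- if a multiset D of reals in [x_min, x_max] attains strictly
more than m distinct bucket indices at base γ, then γ^(m−1) ≤ x_max/x_min. -/
theorem too_many_buckets_bounds_base (γ : ℝ) (hγ : 1 < γ) (m : ℕ) (hm : 1 ≤ m)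
    (xmin xmax : ℝ) (hmin : 0 < xmin) (hle : xmin ≤ xmax)
    (D : Multiset ℝ) (hne : D ≠ 0) (hmem : ∀ x ∈ D, xmin ≤ x ∧ x ≤ xmax)
    (hcard : m < {k : ℤ | ∃ x ∈ D, ⌈Real.logb γ x⌉ = k}.ncard) :
    γ ^ (m - 1) ≤ xmax / xmin := by
  rw [← Nat.sub_add_cancel hm] at hcard
  exact (too_many_buckets_bounds_base_general (S := {x | x ∈ D}) hγ hmin hmem hcard).le
end

section
/- (Quantile query correctness.) Let γ > 1 be a real with α = (γ−1)/(γ+1), let D be a nonempty multiset of positive reals of cardinality n, let q ∈ [0,1], and let r = ⌊1 + q(n−1)⌋ be the target rank, so x_q is the r-th smallest element of D counted with multiplicity. Let i be the least integer such that Σ_{k ≤ i} sk_γ(D)(k) ≥ r. Then the returned estimate x̃_q = 2γ^i/(γ+1) satisfies |x̃_q − x_q| ≤ α·x_q, i.e., the sketch answers every q-quantile query with relative error at most α. -/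
section OrderStatistics

theorem getElem_iff_lt_countP_of_pairwise {α : Type*} {p : α → Bool} {l : List α}
    (hl : l.Pairwise fun x y => p y → p x) {m : ℕ} (hm : m < l.length) :
    p l[m] ↔ m < l.countP p := by
  induction l generalizing m with
  | nil => simp at hm
  | cons a t ih =>
    obtain ⟨head_imp, ht⟩ := List.pairwise_cons.1 hl
    by_cases ha : p a
    · cases m with
      | zero => simp [ha]
      | succ m => simpa [ha] using ih ht (Nat.lt_of_succ_lt_succ hm)
    · have none_sat : ∀ y ∈ a :: t, ¬p y :=
        List.forall_mem_cons.2 ⟨ha, fun y hy hpy => ha (head_imp y hy hpy)⟩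
      have count_zero : (a :: t).countP p = 0 := List.countP_eq_zero.2 none_sat
      simpa only [count_zero, Nat.not_lt_zero, iff_false] using none_sat _ (List.getElem_mem hm)

variable {α β : Type*} [LinearOrder α] [LinearOrder β] {s : Multiset α} {f : α → β} {m : ℕ}

theorem apply_sort_getElem_le_iff (hf : MonotoneOn f {x | x ∈ s})
    (hm : m < (s.sort (· ≤ ·)).length) {b : β} :
    f (s.sort (· ≤ ·))[m] ≤ b ↔ m < (s.filter fun x => f x ≤ b).card := by
  have downward : (s.sort (· ≤ ·)).Pairwise fun x y => decide (f y ≤ b) → decide (f x ≤ b) := by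
    refine (s.pairwise_sort (· ≤ ·)).imp_of_mem fun hx hy hxy => ?_
    simpa only [decide_eq_true_eq] using
      (hf ((Multiset.mem_sort _).1 hx) ((Multiset.mem_sort _).1 hy) hxy).trans
  have count_eq : (s.sort (· ≤ ·)).countP (fun x => f x ≤ b) =
      (s.filter fun x => f x ≤ b).card := by
    rw [← Multiset.coe_countP, Multiset.sort_eq, Multiset.countP_eq_card_filter]
  rw [← count_eq, ← getElem_iff_lt_countP_of_pairwise downward hm, decide_eq_true_eq]

theorem isLeast_lt_card_filter_le (hf : MonotoneOn f {x | x ∈ s})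
    (hm : m < (s.sort (· ≤ ·)).length) :
    IsLeast {b | m < (s.filter fun x => f x ≤ b).card} (f (s.sort (· ≤ ·))[m]) := by
  simp only [← apply_sort_getElem_le_iff hf hm]
  exact isLeast_Ici

end OrderStatistics

theorem floor_one_add_mul_sub_one_mem_Icc {R : Type*} [Ring R] [LinearOrder R]
    [IsStrictOrderedRing R] [FloorRing R] {q : R} (hq : q ∈ Set.Icc 0 1) {n : ℕ} (hn : 1 ≤ n) :
    ⌊1 + q * ((n : R) - 1)⌋ ∈ Set.Icc 1 (n : ℤ) := by
  have hn' : (0 : R) ≤ n - 1 := sub_nonneg.2 (Nat.one_le_cast.2 hn)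
  constructor
  · rw [Int.le_floor, Int.cast_one]
    exact le_add_of_nonneg_right (mul_nonneg hq.1 hn')
  · rw [← Int.floor_natCast (R := R) n]
    exact Int.floor_mono (le_sub_iff_add_le'.1 (mul_le_of_le_one_left hn' hq.2))

theorem abs_two_mul_div_add_one_sub_le {K : Type*} [Field K] [LinearOrder K]
    [IsStrictOrderedRing K] {γ x y : K} (hγ : 0 < γ + 1) (hxy : x ≤ y) (hyx : y ≤ γ * x) :
    |2 * y / (γ + 1) - x| ≤ (γ - 1) / (γ + 1) * x := by
  have err_eq : 2 * y / (γ + 1) - x = (2 * y - (γ + 1) * x) / (γ + 1) := by field_simp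
  rw [err_eq, abs_div, abs_of_pos hγ, div_mul_eq_mul_div]
  gcongr
  rw [abs_le]
  constructor <;> linarith

section Buckets

variable {b x : ℝ}

theorem monotoneOn_ceil_logb (hb : 1 < b) :
    MonotoneOn (fun x => ⌈Real.logb b x⌉) (Set.Ioi 0) :=
  Int.ceil_mono.comp_monotoneOn (Real.strictMonoOn_logb hb).monotoneOn

theorem le_zpow_ceil_logb (hb : 1 < b) (hx : 0 < x) : x ≤ b ^ ⌈Real.logb b x⌉ := by
  rw [← Real.rpow_intCast, ← Real.logb_le_iff_le_rpow hb hx]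
  exact Int.le_ceil _

theorem zpow_ceil_logb_lt_mul (hb : 1 < b) (hx : 0 < x) : b ^ ⌈Real.logb b x⌉ < b * x := by
  have hb₀ : 0 < b := one_pos.trans hb
  rw [← Real.rpow_intCast, ← Real.lt_logb_iff_rpow_lt hb (mul_pos hb₀ hx),
    Real.logb_mul hb₀.ne' hx.ne', Real.logb_self_eq_one hb, add_comm]
  exact Int.ceil_lt_add_one _

theorem abs_two_mul_zpow_ceil_logb_div_sub_le (hb : 1 < b) (hx : 0 < x) :
    |2 * b ^ ⌈Real.logb b x⌉ / (b + 1) - x| ≤ (b - 1) / (b + 1) * x :=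
  abs_two_mul_div_add_one_sub_le (by linarith) (le_zpow_ceil_logb hb hx)
    (zpow_ceil_logb_lt_mul hb hx).le

end Buckets

/-- Quantile query correctness: with α = (γ−1)/(γ+1), target
rank r = ⌊1 + q(n−1)⌋, x_q the r-th smallest element of D, and i the least
integer such that the cumulative bucket count up to i reaches r, the
returned estimate 2γ^i/(γ+1) is an α-accurate q-quantile. -/
theorem quantile_query_correctness (γ : ℝ) (hγ : 1 < γ) (D : Multiset ℝ)
    (hne : D ≠ 0) (hpos : ∀ x ∈ D, 0 < x)
    (q : ℝ) (hq0 : 0 ≤ q) (hq1 : q ≤ 1)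
    (r : ℕ) (hr : (r : ℤ) = ⌊1 + q * ((D.card : ℝ) - 1)⌋)
    (xq : ℝ) (hxq : xq = (D.sort (· ≤ ·)).getD (r - 1) 0)
    (i : ℤ)
    (hi : IsLeast {j : ℤ | r ≤ (D.filter (fun x => ⌈Real.logb γ x⌉ ≤ j)).card} i) :
    |2 * γ ^ i / (γ + 1) - xq| ≤ (γ - 1) / (γ + 1) * xq := by
  obtain ⟨hr1, hrn⟩ : (r : ℤ) ∈ Set.Icc 1 (D.card : ℤ) :=
    hr ▸ floor_one_add_mul_sub_one_mem_Icc ⟨hq0, hq1⟩ (Multiset.card_pos.2 hne)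
  obtain ⟨m, rfl⟩ : ∃ m, r = m + 1 := Nat.exists_eq_add_of_le' (by exact_mod_cast hr1)
  have hm : m < (D.sort (· ≤ ·)).length := by
    rw [Multiset.length_sort]
    exact_mod_cast hrn
  rw [Nat.add_sub_cancel, List.getD_eq_getElem _ _ hm] at hxq
  have xq_pos : 0 < xq :=
    hpos xq ((Multiset.mem_sort (· ≤ ·)).1 (hxq ▸ List.getElem_mem hm))
  have index_eq : i = ⌈Real.logb γ xq⌉ :=
    hxq ▸ hi.unique (isLeast_lt_card_filter_le ((monotoneOn_ceil_logb hγ).mono hpos) hm)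
  rw [index_eq]
  exact abs_two_mul_zpow_ceil_logb_div_sub_le hγ xq_pos
end
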